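/- (Lemma on injective/surjective blocks, part 1.) Let the notation be as in the context, with two splicing data (superscripts 1 and 2) and the splicing map D. Define iota(0) = inf, iota(1) = 1, iota(inf) = 0. Let (c, b, s) be one of the cyclic triples (0, 1, inf), (1, inf, 0), (inf, 0, 1). If the matrix B_c^2 is injective and the matrix B_b^2 is surjective, then: (a) dim ker(D) ≥ dim ker(B_{iota(c)}^1 · B_{iota(b)}^1) · dim ker(B_b^2 · B_c^2); and (b) dim coker(D) ≥ dim coker(B_{iota(c)}^1 · B_{iota(b)}^1) · dim coker(B_b^2 · B_c^2). -/

import Mathlib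

set_option maxHeartbeats 1600000

open Matrix Module
open scoped Kronecker

abbrev F2 : Type := ZMod 2

/-- A splicing datum: the algebraic data extracted from the knot Floer homology of a knot
in a homology sphere, as in Eftekhary's splicing formula. -/
structure SplicingDatum where
  a0 : ℕ
  a1 : ℕ
  ainf : ℕ
  A0 : Matrix (Fin ainf) (Fin ainf) F2
  B0 : Matrix (Fin ainf) (Fin a1) F2
  C0 : Matrix (Fin a1) (Fin ainf) F2
  D0 : Matrix (Fin a1) (Fin a1) F2
  A1 : Matrix (Fin a0) (Fin a0) F2
  B1 : Matrix (Fin a0) (Fin ainf) F2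
  C1 : Matrix (Fin ainf) (Fin a0) F2
  D1 : Matrix (Fin ainf) (Fin ainf) F2
  Ainf : Matrix (Fin a1) (Fin a1) F2
  Binf : Matrix (Fin a1) (Fin a0) F2
  Cinf : Matrix (Fin a0) (Fin a1) F2
  Dinf : Matrix (Fin a0) (Fin a0) F2
  C0inv : Matrix (Fin a1) (Fin ainf) F2
  C1inv : Matrix (Fin ainf) (Fin a0) F2
  Cinfinv : Matrix (Fin a0) (Fin a1) F2
  inv0_left : Matrix.fromBlocks A0 B0 C0 D0 * Matrix.fromBlocks A0 B0 C0inv D0 = 1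
  inv0_right : Matrix.fromBlocks A0 B0 C0inv D0 * Matrix.fromBlocks A0 B0 C0 D0 = 1
  inv1_left : Matrix.fromBlocks A1 B1 C1 D1 * Matrix.fromBlocks A1 B1 C1inv D1 = 1
  inv1_right : Matrix.fromBlocks A1 B1 C1inv D1 * Matrix.fromBlocks A1 B1 C1 D1 = 1
  invinf_left : Matrix.fromBlocks Ainf Binf Cinf Dinf * Matrix.fromBlocks Ainf Binf Cinfinv Dinf = 1
  invinf_right : Matrix.fromBlocks Ainf Binf Cinfinv Dinf * Matrix.fromBlocks Ainf Binf Cinf Dinf = 1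
  comm0 : A0 * B0 + B0 * D0 = 0
  comm1 : A1 * B1 + B1 * D1 = 0
  comminf : Ainf * Binf + Binf * Dinf = 0
  sq0 : B1 * B0 * Binf * (B1 * B0 * Binf) = 0
  sq1 : Binf * B1 * B0 * (Binf * B1 * B0) = 0
  sqinf : B0 * Binf * B1 * (B0 * Binf * B1) = 0

/-- dimension of the kernel of the linear map induced by a matrix -/
noncomputable def kdim {m n : Type*} [Fintype n] (M : Matrix m n F2) : ℕ :=
  finrank F2 ↥(LinearMap.ker M.mulVecLin)

/-- dimension of the cokernel of the linear map induced by a matrix -/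
noncomputable def cdim {m n : Type*} [Fintype n] (M : Matrix m n F2) : ℕ :=
  finrank F2 ((m → F2) ⧸ LinearMap.range M.mulVecLin)

/-- tensor product of two vectors, as a vector indexed by the product type -/
def tensVec {m n : Type*} (x : m → F2) (y : n → F2) : m × n → F2 :=
  fun p => x p.1 * y p.2

namespace SplicingDatum

variable (d : SplicingDatum)

def X0M : Matrix (Fin d.a0) (Fin d.a0) F2 := d.B1 * d.B0 * d.Binf
def X1M : Matrix (Fin d.a1) (Fin d.a1) F2 := d.Binf * d.B1 * d.B0
def XinfM : Matrix (Fin d.ainf) (Fin d.ainf) F2 := d.B0 * d.Binf * d.B1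

def tau0 : Matrix (Fin d.ainf ⊕ Fin d.a1) (Fin d.ainf ⊕ Fin d.a1) F2 :=
  Matrix.fromBlocks d.A0 d.B0 d.C0 d.D0
def tau0inv : Matrix (Fin d.ainf ⊕ Fin d.a1) (Fin d.ainf ⊕ Fin d.a1) F2 :=
  Matrix.fromBlocks d.A0 d.B0 d.C0inv d.D0
def tau1 : Matrix (Fin d.a0 ⊕ Fin d.ainf) (Fin d.a0 ⊕ Fin d.ainf) F2 :=
  Matrix.fromBlocks d.A1 d.B1 d.C1 d.D1
def tau1inv : Matrix (Fin d.a0 ⊕ Fin d.ainf) (Fin d.a0 ⊕ Fin d.ainf) F2 :=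
  Matrix.fromBlocks d.A1 d.B1 d.C1inv d.D1
def tauinf : Matrix (Fin d.a1 ⊕ Fin d.a0) (Fin d.a1 ⊕ Fin d.a0) F2 :=
  Matrix.fromBlocks d.Ainf d.Binf d.Cinf d.Dinf
def tauinfinv : Matrix (Fin d.a1 ⊕ Fin d.a0) (Fin d.a1 ⊕ Fin d.a0) F2 :=
  Matrix.fromBlocks d.Ainf d.Binf d.Cinfinv d.Dinf

/-- the map `finf : F^{ainf+a1} → F^{a0+ainf}` -/
def finfM : Matrix (Fin d.a0 ⊕ Fin d.ainf) (Fin d.ainf ⊕ Fin d.a1) F2 :=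
  Matrix.fromBlocks 0 0 (1 : Matrix (Fin d.ainf) (Fin d.ainf) F2) 0
/-- the map `f0 : F^{a0+ainf} → F^{a1+a0}` -/
def f0M : Matrix (Fin d.a1 ⊕ Fin d.a0) (Fin d.a0 ⊕ Fin d.ainf) F2 :=
  Matrix.fromBlocks 0 0 (1 : Matrix (Fin d.a0) (Fin d.a0) F2) 0
/-- the map `f1 : F^{a1+a0} → F^{ainf+a1}` -/
def f1M : Matrix (Fin d.ainf ⊕ Fin d.a1) (Fin d.a1 ⊕ Fin d.a0) F2 :=
  Matrix.fromBlocks 0 0 (1 : Matrix (Fin d.a1) (Fin d.a1) F2) 0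

def fbarinfM : Matrix (Fin d.a0 ⊕ Fin d.ainf) (Fin d.ainf ⊕ Fin d.a1) F2 :=
  d.tau1inv * d.finfM * d.tau0
def fbar0M : Matrix (Fin d.a1 ⊕ Fin d.a0) (Fin d.a0 ⊕ Fin d.ainf) F2 :=
  d.tauinfinv * d.f0M * d.tau1
def fbar1M : Matrix (Fin d.ainf ⊕ Fin d.a1) (Fin d.a1 ⊕ Fin d.a0) F2 :=
  d.tau0inv * d.f1M * d.tauinf

noncomputable def r0 : ℕ := d.B0.rank
noncomputable def r1 : ℕ := d.B1.rank
noncomputable def rinf : ℕ := d.Binf.rank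

noncomputable def k0 : ℕ :=
  finrank F2 ↥(LinearMap.ker d.f0M.mulVecLin ⊓ LinearMap.ker d.fbar0M.mulVecLin)
noncomputable def k1 : ℕ :=
  finrank F2 ↥(LinearMap.ker d.f1M.mulVecLin ⊓ LinearMap.ker d.fbar1M.mulVecLin)
noncomputable def kinf : ℕ :=
  finrank F2 ↥(LinearMap.ker d.finfM.mulVecLin ⊓ LinearMap.ker d.fbarinfM.mulVecLin)

noncomputable def l0 : ℕ :=
  finrank F2 ↥(LinearMap.ker (d.f0M + d.fbar0M).mulVecLin) - d.k0
noncomputable def l1 : ℕ :=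
  finrank F2 ↥(LinearMap.ker (d.f1M + d.fbar1M).mulVecLin) - d.k1
noncomputable def linf : ℕ :=
  finrank F2 ↥(LinearMap.ker (d.finfM + d.fbarinfM).mulVecLin) - d.kinf

noncomputable def c0 : ℕ :=
  finrank F2 ((Fin d.a1 ⊕ Fin d.a0 → F2) ⧸
    (LinearMap.range d.f0M.mulVecLin ⊔ LinearMap.range d.fbar0M.mulVecLin))
noncomputable def c1 : ℕ :=
  finrank F2 ((Fin d.ainf ⊕ Fin d.a1 → F2) ⧸
    (LinearMap.range d.f1M.mulVecLin ⊔ LinearMap.range d.fbar1M.mulVecLin))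
noncomputable def cinf : ℕ :=
  finrank F2 ((Fin d.a0 ⊕ Fin d.ainf → F2) ⧸
    (LinearMap.range d.finfM.mulVecLin ⊔ LinearMap.range d.fbarinfM.mulVecLin))

noncomputable def dd0 : ℕ :=
  finrank F2 ↥(LinearMap.range d.f0M.mulVecLin ⊔ LinearMap.range d.fbar0M.mulVecLin) -
    finrank F2 ↥(LinearMap.range (d.f0M + d.fbar0M).mulVecLin)
noncomputable def dd1 : ℕ :=
  finrank F2 ↥(LinearMap.range d.f1M.mulVecLin ⊔ LinearMap.range d.fbar1M.mulVecLin) -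
    finrank F2 ↥(LinearMap.range (d.f1M + d.fbar1M).mulVecLin)
noncomputable def ddinf : ℕ :=
  finrank F2 ↥(LinearMap.range d.finfM.mulVecLin ⊔ LinearMap.range d.fbarinfM.mulVecLin) -
    finrank F2 ↥(LinearMap.range (d.finfM + d.fbarinfM).mulVecLin)

noncomputable def delta0 : ℕ := d.a0 - d.rinf - d.l0
noncomputable def delta1 : ℕ := d.a1 - d.r0 - d.l1
noncomputable def deltainf : ℕ := d.ainf - d.r1 - d.linf

end SplicingDatum

namespace SplicingDatum

/-- Index type of the source of the splicing map `D`. -/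
abbrev Src (e1 e2 : SplicingDatum) : Type :=
  (Fin e1.ainf × Fin e2.ainf) ⊕ (Fin e1.ainf × Fin e2.a0) ⊕ (Fin e1.a1 × Fin e2.a0) ⊕
    (Fin e1.a0 × Fin e2.ainf) ⊕ (Fin e1.a0 × Fin e2.a1) ⊕ (Fin e1.a1 × Fin e2.a1)

/-- Index type of the target of the splicing map `D`. -/
abbrev Tgt (e1 e2 : SplicingDatum) : Type :=
  (Fin e1.a0 × Fin e2.a0) ⊕ (Fin e1.ainf × Fin e2.a1) ⊕ (Fin e1.ainf × Fin e2.a0) ⊕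
    (Fin e1.a1 × Fin e2.ainf) ⊕ (Fin e1.a0 × Fin e2.ainf) ⊕ (Fin e1.a1 × Fin e2.a1)

def row1 (e1 e2 : SplicingDatum) : Matrix (Fin e1.a0 × Fin e2.a0) (Src e1 e2) F2 :=
  Matrix.fromCols ((e1.Dinf * e1.B1) ⊗ₖ (e2.B1 * e2.A0)) <|
  Matrix.fromCols ((e1.B1 * e1.A0) ⊗ₖ (1 : Matrix (Fin e2.a0) (Fin e2.a0) F2)) <|
  Matrix.fromCols ((e1.B1 * e1.B0) ⊗ₖ (1 : Matrix (Fin e2.a0) (Fin e2.a0) F2)) <|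
  Matrix.fromCols ((e1.Dinf * e1.A1) ⊗ₖ (e2.B1 * e2.A0)) <|
  Matrix.fromCols ((1 : Matrix (Fin e1.a0) (Fin e1.a0) F2) ⊗ₖ (e2.B1 * e2.B0)) 0

def row2 (e1 e2 : SplicingDatum) : Matrix (Fin e1.ainf × Fin e2.a1) (Src e1 e2) F2 :=
  Matrix.fromCols ((1 : Matrix (Fin e1.ainf) (Fin e1.ainf) F2) ⊗ₖ (e2.Binf * e2.B1)) <|
  Matrix.fromCols ((e1.D1 * e1.A0) ⊗ₖ (e2.Binf * e2.A1)) <|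
  Matrix.fromCols ((e1.D1 * e1.B0) ⊗ₖ (e2.Binf * e2.A1)) <|
  Matrix.fromCols 0 <|
  Matrix.fromCols ((e1.B0 * e1.Binf) ⊗ₖ (1 : Matrix (Fin e2.a1) (Fin e2.a1) F2))
    ((e1.B0 * e1.Ainf) ⊗ₖ (1 : Matrix (Fin e2.a1) (Fin e2.a1) F2))

def row3 (e1 e2 : SplicingDatum) : Matrix (Fin e1.ainf × Fin e2.a0) (Src e1 e2) F2 :=
  Matrix.fromCols ((1 : Matrix (Fin e1.ainf) (Fin e1.ainf) F2) ⊗ₖ (e2.Dinf * e2.B1)) <|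
  Matrix.fromCols
    ((1 : Matrix (Fin e1.ainf) (Fin e1.ainf) F2) ⊗ₖ (1 : Matrix (Fin e2.a0) (Fin e2.a0) F2) +
      (e1.D1 * e1.A0) ⊗ₖ (e2.Dinf * e2.A1)) <|
  Matrix.fromCols ((e1.D1 * e1.B0) ⊗ₖ (e2.Dinf * e2.A1)) <|
  Matrix.fromCols 0 <|
  Matrix.fromCols 0 0

def row4 (e1 e2 : SplicingDatum) : Matrix (Fin e1.a1 × Fin e2.ainf) (Src e1 e2) F2 :=
  Matrix.fromCols ((e1.Binf * e1.B1) ⊗ₖ (1 : Matrix (Fin e2.ainf) (Fin e2.ainf) F2)) <|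
  Matrix.fromCols 0 <|
  Matrix.fromCols ((1 : Matrix (Fin e1.a1) (Fin e1.a1) F2) ⊗ₖ (e2.B0 * e2.Binf)) <|
  Matrix.fromCols ((e1.Binf * e1.A1) ⊗ₖ (1 : Matrix (Fin e2.ainf) (Fin e2.ainf) F2)) <|
  Matrix.fromCols
    ((e1.D0 * e1.Binf) ⊗ₖ (e2.B0 * e2.Ainf) + (e1.X1M * e1.Binf) ⊗ₖ (e2.B0 * e2.X1M))
    ((e1.D0 * e1.Ainf) ⊗ₖ (e2.B0 * e2.Ainf) + (e1.X1M * e1.Ainf) ⊗ₖ (e2.B0 * e2.X1M))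

def row5 (e1 e2 : SplicingDatum) : Matrix (Fin e1.a0 × Fin e2.ainf) (Src e1 e2) F2 :=
  Matrix.fromCols ((e1.Dinf * e1.B1) ⊗ₖ (e2.D1 * e2.A0)) <|
  Matrix.fromCols 0 <|
  Matrix.fromCols 0 <|
  Matrix.fromCols
    ((1 : Matrix (Fin e1.a0) (Fin e1.a0) F2) ⊗ₖ (1 : Matrix (Fin e2.ainf) (Fin e2.ainf) F2) +
      (e1.Dinf * e1.A1) ⊗ₖ (e2.D1 * e2.A0)) <|
  Matrix.fromCols ((1 : Matrix (Fin e1.a0) (Fin e1.a0) F2) ⊗ₖ (e2.D1 * e2.B0)) 0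

def row6 (e1 e2 : SplicingDatum) : Matrix (Fin e1.a1 × Fin e2.a1) (Src e1 e2) F2 :=
  Matrix.fromCols 0 <|
  Matrix.fromCols 0 <|
  Matrix.fromCols ((1 : Matrix (Fin e1.a1) (Fin e1.a1) F2) ⊗ₖ (e2.D0 * e2.Binf)) <|
  Matrix.fromCols 0 <|
  Matrix.fromCols
    ((e1.D0 * e1.Binf) ⊗ₖ (e2.D0 * e2.Ainf) + (e1.X1M * e1.Binf) ⊗ₖ (e2.D0 * e2.X1M))
    ((1 : Matrix (Fin e1.a1) (Fin e1.a1) F2) ⊗ₖ (1 : Matrix (Fin e2.a1) (Fin e2.a1) F2) +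
      (e1.D0 * e1.Ainf) ⊗ₖ (e2.D0 * e2.Ainf) + (e1.X1M * e1.Ainf) ⊗ₖ (e2.D0 * e2.X1M))

/-- The splicing map `D = D(K1, K2)` as a `6 × 6` block matrix. -/
def spliceD (e1 e2 : SplicingDatum) : Matrix (Tgt e1 e2) (Src e1 e2) F2 :=
  Matrix.fromRows (row1 e1 e2) <| Matrix.fromRows (row2 e1 e2) <|
  Matrix.fromRows (row3 e1 e2) <| Matrix.fromRows (row4 e1 e2) <|
  Matrix.fromRows (row5 e1 e2) (row6 e1 e2)

end SplicingDatum

/-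
Let `M = B_ι(c) B_ι(b)` for the first datum and `P = B_b B_c` for the second. Vectors `x` with
`M x = 0` and `y` with `P y = 0` span a copy of `ker M ⊗ ker P`, so it suffices to map `x ⊗ y`
injectively and linearly into `ker D`. When `B_c` is injective for the second datum,
`x ⊗ y ↦ x ⊗ B_c y` is injective; it lands in one summand of the source of `D`, and adding a
correction in a second summand makes every row of `D` vanish on it: in two of the rows the terms
cancel by `A_c B_c = B_c D_c`, and all remaining terms contain a factor `M x` or `P y`, after a
commutation relation for the first datum where needed. Dually, when `B_b` is surjective,
`x ⊗ y ↦ x ⊗ y B_b` is injective on row vectors, and corrections in two further summands turn it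
into functionals killing the image of `D`.
-/

open TensorProduct in
theorem finrank_ker_mul_finrank_ker_le {K V V' W W' S T : Type*} [Field K]
    [AddCommGroup V] [Module K V] [AddCommGroup V'] [Module K V']
    [AddCommGroup W] [Module K W] [AddCommGroup W'] [Module K W']
    [AddCommGroup S] [Module K S] [FiniteDimensional K S] [AddCommGroup T] [Module K T]
    {f : V →ₗ[K] V'} {g : W →ₗ[K] W'} {D : S →ₗ[K] T} {Φ : V ⊗[K] W →ₗ[K] S}
    (hΦ : Function.Injective Φ)
    (hD : ∀ x ∈ LinearMap.ker f, ∀ y ∈ LinearMap.ker g, D (Φ (x ⊗ₜ y)) = 0) :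
    finrank K (LinearMap.ker f) * finrank K (LinearMap.ker g) ≤ finrank K (LinearMap.ker D) := by
  let Ψ : LinearMap.ker f ⊗[K] LinearMap.ker g →ₗ[K] S :=
    Φ ∘ₗ TensorProduct.map (LinearMap.ker f).subtype (LinearMap.ker g).subtype
  have hΨ : Function.Injective Ψ :=
    hΦ.comp (TensorProduct.map_injective_of_flat_flat _ _
      (Submodule.subtype_injective _) (Submodule.subtype_injective _))
  have hDΨ : D ∘ₗ Ψ = 0 := TensorProduct.ext' fun x y => hD x x.2 y y.2
  rw [← finrank_tensorProduct]
  exact LinearMap.finrank_le_finrank_of_injective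
    (f := Ψ.codRestrict (LinearMap.ker D) (LinearMap.congr_fun hDΨ))
    ((Ψ.injective_codRestrict_iff _).2 hΨ)

section Semiring

variable {R m n p q : Type*} [CommSemiring R]

theorem vecMul_injective_of_mulVec_surjective [Fintype m] [Fintype n] {M : Matrix m n R}
    (hM : Function.Surjective M.mulVec) : Function.Injective fun v => v ᵥ* M := by
  intro v w hvw
  refine dotProduct_eq v w fun u => ?_
  obtain ⟨z, rfl⟩ := hM u
  rw [dotProduct_mulVec, dotProduct_mulVec]
  exact congrArg (· ⬝ᵥ z) hvw

variable [Fintype n] [DecidableEq n] [Fintype q]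

theorem one_kronecker_mulVec_apply (B : Matrix p q R) (v : n × q → R) (i : n) (j : p) :
    (((1 : Matrix n n R) ⊗ₖ B) *ᵥ v) (i, j) = (B *ᵥ fun k => v (i, k)) j := by
  simp [mulVec, dotProduct, Fintype.sum_prod_type, one_apply]

theorem one_kronecker_mulVec_injective {B : Matrix p q R} (hB : Function.Injective B.mulVec) :
    Function.Injective ((1 : Matrix n n R) ⊗ₖ B).mulVec := by
  intro v w hvw
  ext ⟨i, k⟩
  have hrow : (B *ᵥ fun k => v (i, k)) = B *ᵥ fun k => w (i, k) := by
    ext j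
    simpa only [one_kronecker_mulVec_apply] using congrFun hvw (i, j)
  exact congrFun (hB hrow) k

theorem vecMul_one_kronecker_injective [Fintype p] {B : Matrix q p R}
    (hB : Function.Surjective B.mulVec) :
    Function.Injective fun v => v ᵥ* ((1 : Matrix n n R) ⊗ₖ B) := by
  have hBT : Function.Injective Bᵀ.mulVec := by
    simpa only [← mulVec_transpose] using vecMul_injective_of_mulVec_surjective hB
  simpa only [← mulVec_transpose, ← kroneckerMap_transpose, transpose_one] using
    one_kronecker_mulVec_injective (n := n) hBT

end Semiring

section TensVec

variable {m n p q : Type*}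

@[simp]
theorem tensVec_zero (x : m → F2) : tensVec x (0 : n → F2) = 0 := by
  ext
  simp [tensVec]

@[simp]
theorem zero_tensVec (y : n → F2) : tensVec (0 : m → F2) y = 0 := by
  ext
  simp [tensVec]

theorem kronecker_mulVec_tensVec [Fintype n] [Fintype q] (A : Matrix m n F2) (B : Matrix p q F2)
    (x : n → F2) (y : q → F2) : (A ⊗ₖ B) *ᵥ tensVec x y = tensVec (A *ᵥ x) (B *ᵥ y) := by
  ext ⟨i, j⟩
  simp only [mulVec, dotProduct, tensVec, kroneckerMap_apply, Fintype.sum_prod_type,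
    Finset.sum_mul_sum, mul_mul_mul_comm]

theorem tensVec_vecMul_kronecker [Fintype m] [Fintype p] (A : Matrix m n F2) (B : Matrix p q F2)
    (x : m → F2) (y : p → F2) : tensVec x y ᵥ* (A ⊗ₖ B) = tensVec (x ᵥ* A) (y ᵥ* B) := by
  rw [← mulVec_transpose, ← kroneckerMap_transpose, kronecker_mulVec_tensVec, mulVec_transpose,
    mulVec_transpose]

end TensVec

section KernelCokernel

variable {m n p q s t : Type*}

theorem cdim_eq_kdim_transpose [Fintype m] [Fintype n] (M : Matrix m n F2) :
    cdim M = kdim Mᵀ := by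
  have hM := (LinearMap.range M.mulVecLin).finrank_quotient_add_finrank
  have hMT := Mᵀ.mulVecLin.finrank_range_add_finrank_ker
  have hrank : finrank F2 (LinearMap.range Mᵀ.mulVecLin) =
      finrank F2 (LinearMap.range M.mulVecLin) := M.rank_transpose
  rw [finrank_fintype_fun_eq_card] at hM hMT
  unfold cdim kdim
  omega

theorem kdim_mul_kdim_le [Fintype n] [Fintype q] [Fintype s] {M : Matrix m n F2}
    {P : Matrix p q F2} {D : Matrix t s F2} (Q : Matrix s (n × q) F2)
    (hQ : Function.Injective Q.mulVec)
    (hD : ∀ x y, M *ᵥ x = 0 → P *ᵥ y = 0 → D *ᵥ (Q *ᵥ tensVec x y) = 0) :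
    kdim M * kdim P ≤ kdim D := by
  let e := ((Pi.basisFun F2 n).tensorProduct (Pi.basisFun F2 q)).equivFun
  have he (x : n → F2) (y : q → F2) : e (x ⊗ₜ y) = tensVec x y := by
    ext ⟨i, j⟩
    simp [e, tensVec, mul_comm]
  refine finrank_ker_mul_finrank_ker_le (Φ := Q.mulVecLin ∘ₗ e.toLinearMap)
    (hQ.comp e.injective) fun x hx y hy => ?_
  simpa [he] using hD x y hx hy

theorem cdim_mul_cdim_le [Fintype m] [Fintype n] [Fintype p] [Fintype q] [Fintype s] [Fintype t]
    {M : Matrix m n F2} {P : Matrix p q F2} {D : Matrix t s F2} (Q : Matrix (m × p) t F2)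
    (hQ : Function.Injective fun v => v ᵥ* Q)
    (hD : ∀ x y, x ᵥ* M = 0 → y ᵥ* P = 0 → (tensVec x y ᵥ* Q) ᵥ* D = 0) :
    cdim M * cdim P ≤ cdim D := by
  simp only [cdim_eq_kdim_transpose]
  apply kdim_mul_kdim_le Qᵀ
  · simpa only [← mulVec_transpose] using hQ
  · simpa only [mulVec_transpose] using hD

end KernelCokernel

namespace SplicingDatum

section Relations

variable (d : SplicingDatum)

theorem A0_mul_B0 : d.A0 * d.B0 = d.B0 * d.D0 := by
  rw [← sub_eq_zero, ZModModule.sub_eq_add, d.comm0]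

theorem A1_mul_B1 : d.A1 * d.B1 = d.B1 * d.D1 := by
  rw [← sub_eq_zero, ZModModule.sub_eq_add, d.comm1]

theorem Ainf_mul_Binf : d.Ainf * d.Binf = d.Binf * d.Dinf := by
  rw [← sub_eq_zero, ZModModule.sub_eq_add, d.comminf]

theorem A0_mulVec_B0_mulVec (x : Fin d.a1 → F2) :
    d.A0 *ᵥ (d.B0 *ᵥ x) = d.B0 *ᵥ (d.D0 *ᵥ x) := by
  rw [mulVec_mulVec, mulVec_mulVec, A0_mul_B0]

theorem A1_mulVec_B1_mulVec (x : Fin d.ainf → F2) :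
    d.A1 *ᵥ (d.B1 *ᵥ x) = d.B1 *ᵥ (d.D1 *ᵥ x) := by
  rw [mulVec_mulVec, mulVec_mulVec, A1_mul_B1]

theorem Ainf_mulVec_Binf_mulVec (x : Fin d.a0 → F2) :
    d.Ainf *ᵥ (d.Binf *ᵥ x) = d.Binf *ᵥ (d.Dinf *ᵥ x) := by
  rw [mulVec_mulVec, mulVec_mulVec, Ainf_mul_Binf]

theorem vecMul_A0_vecMul_B0 (x : Fin d.ainf → F2) :
    (x ᵥ* d.A0) ᵥ* d.B0 = (x ᵥ* d.B0) ᵥ* d.D0 := by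
  rw [vecMul_vecMul, vecMul_vecMul, A0_mul_B0]

theorem vecMul_A1_vecMul_B1 (x : Fin d.a0 → F2) :
    (x ᵥ* d.A1) ᵥ* d.B1 = (x ᵥ* d.B1) ᵥ* d.D1 := by
  rw [vecMul_vecMul, vecMul_vecMul, A1_mul_B1]

theorem vecMul_Ainf_vecMul_Binf (x : Fin d.a1 → F2) :
    (x ᵥ* d.Ainf) ᵥ* d.Binf = (x ᵥ* d.Binf) ᵥ* d.Dinf := by
  rw [vecMul_vecMul, vecMul_vecMul, Ainf_mul_Binf]

end Relations

section Maps

variable (e1 e2 : SplicingDatum)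

/-- The map `x ⊗ y ↦ x ⊗ B0 y`, corrected so as to carry `ker (Binf B1) ⊗ ker (B1 B0)` into
`ker D`; the first factor belongs to `e1`, the second to `e2`. -/
def kerEmbedding0 : Matrix (Src e1 e2) (Fin e1.ainf × Fin e2.a1) F2 :=
  fromRows (1 ⊗ₖ e2.B0) <| fromRows 0 <| fromRows 0 <| fromRows 0 <|
  fromRows ((e1.Dinf * e1.B1) ⊗ₖ e2.D0) 0

/-- The map of row vectors `x ⊗ y ↦ x ⊗ y B1`, corrected so as to carry the tensors of rows killed
by `Binf B1` and by `B1 B0` to rows killed by `D`. -/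
def cokerProjection0 : Matrix (Fin e1.a1 × Fin e2.a0) (Tgt e1 e2) F2 :=
  fromCols ((e1.Binf * e1.A1) ⊗ₖ e2.A1) <| fromCols 0 <| fromCols 0 <| fromCols (1 ⊗ₖ e2.B1) <|
  fromCols ((e1.Binf * e1.A1) ⊗ₖ e2.B1) 0

/-- The analogue of `kerEmbedding0` for `c = 1`, built on `x ⊗ y ↦ x ⊗ B1 y`. -/
def kerEmbedding1 : Matrix (Src e1 e2) (Fin e1.a1 × Fin e2.ainf) F2 :=
  fromRows ((e1.D1 * e1.B0) ⊗ₖ e2.D1) <| fromRows 0 <| fromRows (1 ⊗ₖ e2.B1) 0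

/-- The analogue of `cokerProjection0` for `c = 1`, built on `x ⊗ y ↦ x ⊗ y Binf`. -/
def cokerProjection1 : Matrix (Fin e1.a0 × Fin e2.a1) (Tgt e1 e2) F2 :=
  fromCols (1 ⊗ₖ e2.Binf) <| fromCols ((e1.B1 * e1.A0) ⊗ₖ e2.Ainf) <|
  fromCols ((e1.B1 * e1.A0) ⊗ₖ e2.Binf) <| fromCols 0 <| fromCols 0 0

/-- The analogue of `kerEmbedding0` for `c = ∞`, built on `x ⊗ y ↦ x ⊗ Binf y`. -/
def kerEmbeddingInf : Matrix (Src e1 e2) (Fin e1.a0 × Fin e2.a0) F2 :=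
  fromRows 0 <| fromRows 0 <| fromRows ((e1.D0 * e1.Binf) ⊗ₖ e2.Dinf) <| fromRows 0 <|
  fromRows (1 ⊗ₖ e2.Binf) 0

/-- The analogue of `cokerProjection0` for `c = ∞`, built on `x ⊗ y ↦ x ⊗ y B0`. -/
def cokerProjectionInf : Matrix (Fin e1.ainf × Fin e2.ainf) (Tgt e1 e2) F2 :=
  fromCols 0 <| fromCols (1 ⊗ₖ e2.B0) <| fromCols 0 <| fromCols ((e1.B0 * e1.Ainf) ⊗ₖ e2.A0) <|
  fromCols 0 ((e1.B0 * e1.Ainf) ⊗ₖ e2.B0)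

end Maps

section Bounds

variable {e1 e2 : SplicingDatum}

theorem spliceD_mulVec_eq_zero_iff {v : Src e1 e2 → F2} :
    spliceD e1 e2 *ᵥ v = 0 ↔ row1 e1 e2 *ᵥ v = 0 ∧ row2 e1 e2 *ᵥ v = 0 ∧ row3 e1 e2 *ᵥ v = 0 ∧
      row4 e1 e2 *ᵥ v = 0 ∧ row5 e1 e2 *ᵥ v = 0 ∧ row6 e1 e2 *ᵥ v = 0 := by
  simp only [spliceD, fromRows_mulVec, ← Sum.elim_zero_zero, Sum.elim_eq_iff]

theorem sumElim_vecMul_spliceD (v1 : Fin e1.a0 × Fin e2.a0 → F2) (v2 : Fin e1.ainf × Fin e2.a1 → F2)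
    (v3 : Fin e1.ainf × Fin e2.a0 → F2) (v4 : Fin e1.a1 × Fin e2.ainf → F2)
    (v5 : Fin e1.a0 × Fin e2.ainf → F2) (v6 : Fin e1.a1 × Fin e2.a1 → F2) :
    Sum.elim v1 (Sum.elim v2 (Sum.elim v3 (Sum.elim v4 (Sum.elim v5 v6)))) ᵥ* spliceD e1 e2 =
      v1 ᵥ* row1 e1 e2 + (v2 ᵥ* row2 e1 e2 + (v3 ᵥ* row3 e1 e2 +
        (v4 ᵥ* row4 e1 e2 + (v5 ᵥ* row5 e1 e2 + v6 ᵥ* row6 e1 e2)))) := by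
  simp only [spliceD, sumElim_vecMul_fromRows]

theorem spliceD_mulVec_kerEmbedding0 {x : Fin e1.ainf → F2} {y : Fin e2.a1 → F2}
    (hx : (e1.Binf * e1.B1) *ᵥ x = 0) (hy : (e2.B1 * e2.B0) *ᵥ y = 0) :
    spliceD e1 e2 *ᵥ (kerEmbedding0 e1 e2 *ᵥ tensVec x y) = 0 := by
  rw [← mulVec_mulVec] at hx hy
  have hx' : e1.Binf *ᵥ (e1.Dinf *ᵥ (e1.B1 *ᵥ x)) = 0 := by
    rw [← Ainf_mulVec_Binf_mulVec, hx, mulVec_zero]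
  rw [spliceD_mulVec_eq_zero_iff]
  refine ⟨?_, ?_, ?_, ?_, ?_, ?_⟩ <;>
    simp [row1, row2, row3, row4, row5, row6, kerEmbedding0, X1M, fromRows_mulVec,
      kronecker_mulVec_tensVec, add_mulVec, ← mulVec_mulVec, hx, hx', hy,
      A0_mulVec_B0_mulVec, ZModModule.add_self]

theorem cokerProjection0_vecMul_spliceD {x : Fin e1.a1 → F2} {y : Fin e2.a0 → F2}
    (hx : x ᵥ* (e1.Binf * e1.B1) = 0) (hy : y ᵥ* (e2.B1 * e2.B0) = 0) :
    (tensVec x y ᵥ* cokerProjection0 e1 e2) ᵥ* spliceD e1 e2 = 0 := by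
  rw [← vecMul_vecMul] at hx hy
  have hx' : ((x ᵥ* e1.Binf) ᵥ* e1.A1) ᵥ* e1.B1 = 0 := by
    rw [vecMul_A1_vecMul_B1, hx, zero_vecMul]
  simp only [cokerProjection0, vecMul_fromCols, sumElim_vecMul_spliceD]
  simp [row1, row2, row3, row4, row5, row6, X1M, vecMul_fromCols, tensVec_vecMul_kronecker,
    vecMul_add, ← vecMul_vecMul, hx, hx', hy, vecMul_A1_vecMul_B1, ← Sum.elim_add_add,
    add_comm, add_left_comm, ZModModule.add_self]

theorem spliceD_mulVec_kerEmbedding1 {x : Fin e1.a1 → F2} {y : Fin e2.ainf → F2}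
    (hx : (e1.B1 * e1.B0) *ᵥ x = 0) (hy : (e2.Binf * e2.B1) *ᵥ y = 0) :
    spliceD e1 e2 *ᵥ (kerEmbedding1 e1 e2 *ᵥ tensVec x y) = 0 := by
  rw [← mulVec_mulVec] at hx hy
  have hx' : e1.B1 *ᵥ (e1.D1 *ᵥ (e1.B0 *ᵥ x)) = 0 := by
    rw [← A1_mulVec_B1_mulVec, hx, mulVec_zero]
  rw [spliceD_mulVec_eq_zero_iff]
  refine ⟨?_, ?_, ?_, ?_, ?_, ?_⟩ <;>
    simp [row1, row2, row3, row4, row5, row6, kerEmbedding1, X1M, fromRows_mulVec,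
      kronecker_mulVec_tensVec, ← mulVec_mulVec, hx, hx', hy,
      A1_mulVec_B1_mulVec, ZModModule.add_self]

theorem cokerProjection1_vecMul_spliceD {x : Fin e1.a0 → F2} {y : Fin e2.a1 → F2}
    (hx : x ᵥ* (e1.B1 * e1.B0) = 0) (hy : y ᵥ* (e2.Binf * e2.B1) = 0) :
    (tensVec x y ᵥ* cokerProjection1 e1 e2) ᵥ* spliceD e1 e2 = 0 := by
  rw [← vecMul_vecMul] at hx hy
  have hx' : ((x ᵥ* e1.B1) ᵥ* e1.A0) ᵥ* e1.B0 = 0 := by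
    rw [vecMul_A0_vecMul_B0, hx, zero_vecMul]
  simp only [cokerProjection1, vecMul_fromCols, sumElim_vecMul_spliceD]
  simp [row1, row2, row3, row4, row5, row6, X1M, vecMul_fromCols, tensVec_vecMul_kronecker,
    vecMul_add, ← vecMul_vecMul, hx, hx', hy, vecMul_Ainf_vecMul_Binf, ← Sum.elim_add_add,
    add_comm, add_left_comm, ZModModule.add_self]

theorem spliceD_mulVec_kerEmbeddingInf {x : Fin e1.a0 → F2} {y : Fin e2.a0 → F2}
    (hx : (e1.B0 * e1.Binf) *ᵥ x = 0) (hy : (e2.B0 * e2.Binf) *ᵥ y = 0) :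
    spliceD e1 e2 *ᵥ (kerEmbeddingInf e1 e2 *ᵥ tensVec x y) = 0 := by
  rw [← mulVec_mulVec] at hx hy
  have hx' : e1.B0 *ᵥ (e1.D0 *ᵥ (e1.Binf *ᵥ x)) = 0 := by
    rw [← A0_mulVec_B0_mulVec, hx, mulVec_zero]
  rw [spliceD_mulVec_eq_zero_iff]
  refine ⟨?_, ?_, ?_, ?_, ?_, ?_⟩ <;>
    simp [row1, row2, row3, row4, row5, row6, kerEmbeddingInf, X1M, fromRows_mulVec,
      kronecker_mulVec_tensVec, add_mulVec, ← mulVec_mulVec, hx, hx', hy,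
      Ainf_mulVec_Binf_mulVec, ZModModule.add_self]

theorem cokerProjectionInf_vecMul_spliceD {x : Fin e1.ainf → F2} {y : Fin e2.ainf → F2}
    (hx : x ᵥ* (e1.B0 * e1.Binf) = 0) (hy : y ᵥ* (e2.B0 * e2.Binf) = 0) :
    (tensVec x y ᵥ* cokerProjectionInf e1 e2) ᵥ* spliceD e1 e2 = 0 := by
  rw [← vecMul_vecMul] at hx hy
  have hx' : ((x ᵥ* e1.B0) ᵥ* e1.Ainf) ᵥ* e1.Binf = 0 := by
    rw [vecMul_Ainf_vecMul_Binf, hx, zero_vecMul]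
  simp only [cokerProjectionInf, vecMul_fromCols, sumElim_vecMul_spliceD]
  simp [row1, row2, row3, row4, row5, row6, X1M, vecMul_fromCols, tensVec_vecMul_kronecker,
    vecMul_add, ← vecMul_vecMul, hx, hx', hy, vecMul_A0_vecMul_B0, ← Sum.elim_add_add,
    add_comm, add_left_comm, ZModModule.add_self]

theorem kdim_mul_kdim_le_kdim_spliceD_of_injective_B0 (hB : Function.Injective e2.B0.mulVecLin) :
    kdim (e1.Binf * e1.B1) * kdim (e2.B1 * e2.B0) ≤ kdim (spliceD e1 e2) :=
  kdim_mul_kdim_le (kerEmbedding0 e1 e2)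
    (fun _ _ h => one_kronecker_mulVec_injective hB (congrArg (· ∘ Sum.inl) h))
    fun _ _ => spliceD_mulVec_kerEmbedding0

theorem cdim_mul_cdim_le_cdim_spliceD_of_surjective_B1 (hB : Function.Surjective e2.B1.mulVecLin) :
    cdim (e1.Binf * e1.B1) * cdim (e2.B1 * e2.B0) ≤ cdim (spliceD e1 e2) :=
  cdim_mul_cdim_le (cokerProjection0 e1 e2)
    (fun _ _ h => vecMul_one_kronecker_injective hB
      (congrArg (· ∘ Sum.inr ∘ Sum.inr ∘ Sum.inr ∘ Sum.inl) h))
    fun _ _ => cokerProjection0_vecMul_spliceD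

theorem kdim_mul_kdim_le_kdim_spliceD_of_injective_B1 (hB : Function.Injective e2.B1.mulVecLin) :
    kdim (e1.B1 * e1.B0) * kdim (e2.Binf * e2.B1) ≤ kdim (spliceD e1 e2) :=
  kdim_mul_kdim_le (kerEmbedding1 e1 e2)
    (fun _ _ h => one_kronecker_mulVec_injective hB (congrArg (· ∘ Sum.inr ∘ Sum.inr ∘ Sum.inl) h))
    fun _ _ => spliceD_mulVec_kerEmbedding1

theorem cdim_mul_cdim_le_cdim_spliceD_of_surjective_Binf
    (hB : Function.Surjective e2.Binf.mulVecLin) :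
    cdim (e1.B1 * e1.B0) * cdim (e2.Binf * e2.B1) ≤ cdim (spliceD e1 e2) :=
  cdim_mul_cdim_le (cokerProjection1 e1 e2)
    (fun _ _ h => vecMul_one_kronecker_injective hB (congrArg (· ∘ Sum.inl) h))
    fun _ _ => cokerProjection1_vecMul_spliceD

theorem kdim_mul_kdim_le_kdim_spliceD_of_injective_Binf
    (hB : Function.Injective e2.Binf.mulVecLin) :
    kdim (e1.B0 * e1.Binf) * kdim (e2.B0 * e2.Binf) ≤ kdim (spliceD e1 e2) :=
  kdim_mul_kdim_le (kerEmbeddingInf e1 e2)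
    (fun _ _ h => one_kronecker_mulVec_injective hB
      (congrArg (· ∘ Sum.inr ∘ Sum.inr ∘ Sum.inr ∘ Sum.inr ∘ Sum.inl) h))
    fun _ _ => spliceD_mulVec_kerEmbeddingInf

theorem cdim_mul_cdim_le_cdim_spliceD_of_surjective_B0 (hB : Function.Surjective e2.B0.mulVecLin) :
    cdim (e1.B0 * e1.Binf) * cdim (e2.B0 * e2.Binf) ≤ cdim (spliceD e1 e2) :=
  cdim_mul_cdim_le (cokerProjectionInf e1 e2)
    (fun _ _ h => vecMul_one_kronecker_injective hB (congrArg (· ∘ Sum.inr ∘ Sum.inl) h))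
    fun _ _ => cokerProjectionInf_vecMul_spliceD

end Bounds

end SplicingDatum

open SplicingDatum in
theorem stmt8_general (e1 e2 : SplicingDatum) :
    (Function.Injective e2.B0.mulVecLin →
      kdim (e1.Binf * e1.B1) * kdim (e2.B1 * e2.B0) ≤ kdim (spliceD e1 e2)) ∧
    (Function.Surjective e2.B1.mulVecLin →
      cdim (e1.Binf * e1.B1) * cdim (e2.B1 * e2.B0) ≤ cdim (spliceD e1 e2)) ∧
    (Function.Injective e2.B1.mulVecLin →
      kdim (e1.B1 * e1.B0) * kdim (e2.Binf * e2.B1) ≤ kdim (spliceD e1 e2)) ∧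
    (Function.Surjective e2.Binf.mulVecLin →
      cdim (e1.B1 * e1.B0) * cdim (e2.Binf * e2.B1) ≤ cdim (spliceD e1 e2)) ∧
    (Function.Injective e2.Binf.mulVecLin →
      kdim (e1.B0 * e1.Binf) * kdim (e2.B0 * e2.Binf) ≤ kdim (spliceD e1 e2)) ∧
    (Function.Surjective e2.B0.mulVecLin →
      cdim (e1.B0 * e1.Binf) * cdim (e2.B0 * e2.Binf) ≤ cdim (spliceD e1 e2)) :=
  ⟨kdim_mul_kdim_le_kdim_spliceD_of_injective_B0, cdim_mul_cdim_le_cdim_spliceD_of_surjective_B1,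
    kdim_mul_kdim_le_kdim_spliceD_of_injective_B1, cdim_mul_cdim_le_cdim_spliceD_of_surjective_Binf,
    kdim_mul_kdim_le_kdim_spliceD_of_injective_Binf, cdim_mul_cdim_le_cdim_spliceD_of_surjective_B0⟩

open SplicingDatum in
/-- Lemma on injective/surjective blocks, part 1.  The three conjuncts
correspond to the cyclic triples `(c,b,s) = (0,1,∞), (1,∞,0), (∞,0,1)`, with
`iota(0) = ∞`, `iota(1) = 1`, `iota(∞) = 0`. -/
theorem stmt8 (e1 e2 : SplicingDatum) :
    ((Function.Injective e2.B0.mulVecLin ∧ Function.Surjective e2.B1.mulVecLin) →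
      kdim (spliceD e1 e2) ≥ kdim (e1.Binf * e1.B1) * kdim (e2.B1 * e2.B0) ∧
      cdim (spliceD e1 e2) ≥ cdim (e1.Binf * e1.B1) * cdim (e2.B1 * e2.B0)) ∧
    ((Function.Injective e2.B1.mulVecLin ∧ Function.Surjective e2.Binf.mulVecLin) →
      kdim (spliceD e1 e2) ≥ kdim (e1.B1 * e1.B0) * kdim (e2.Binf * e2.B1) ∧
      cdim (spliceD e1 e2) ≥ cdim (e1.B1 * e1.B0) * cdim (e2.Binf * e2.B1)) ∧
    ((Function.Injective e2.Binf.mulVecLin ∧ Function.Surjective e2.B0.mulVecLin) →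
      kdim (spliceD e1 e2) ≥ kdim (e1.B0 * e1.Binf) * kdim (e2.B0 * e2.Binf) ∧
      cdim (spliceD e1 e2) ≥ cdim (e1.B0 * e1.Binf) * cdim (e2.B0 * e2.Binf)) := by
  obtain ⟨ker0, coker0, ker1, coker1, kerInf, cokerInf⟩ := stmt8_general e1 e2
  exact ⟨And.imp ker0 coker0, And.imp ker1 coker1, And.imp kerInf cokerInf⟩
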